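/- Let n be an odd positive integer. Then the group V_{8n} has exactly 2n+3 conjugacy classes. -/

import Mathlib

/-- The relators of the presentation
`V_{8n} = ⟨a, b ∣ a^{2n} = b⁴ = 1, (ba)² = 1, (b⁻¹a)² = 1⟩`,
where `a` is the generator indexed by `0` and `b` the one indexed by `1`.
(The relations `ba = a⁻¹b⁻¹` and `b⁻¹a = a⁻¹b` are equivalent to
`(ba)² = 1` and `(b⁻¹a)² = 1` respectively.) -/
def V8nRels (n : ℕ) : Set (FreeGroup (Fin 2)) :=
  {(FreeGroup.of 0) ^ (2 * n), (FreeGroup.of 1) ^ 4,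
   (FreeGroup.of 1 * FreeGroup.of 0) ^ 2,
   ((FreeGroup.of 1)⁻¹ * FreeGroup.of 0) ^ 2}

/-- The group `V_{8n}` of order `8n`. -/
abbrev V8n (n : ℕ) : Type := PresentedGroup (V8nRels n)

/-- The generator `a` of `V_{8n}`. -/
def aV (n : ℕ) : V8n n := PresentedGroup.of 0

/-- The generator `b` of `V_{8n}`. -/
def bV (n : ℕ) : V8n n := PresentedGroup.of 1

/-!
If `A` is an abelian subgroup of index two in a finite group `G` and `g ∉ A`, counting the
commuting pairs in `(A ∪ Ag) × (A ∪ Ag)` gives `2 k(G) = |A| + 3 |C_A(g)|`, where `k(G)` is the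
number of conjugacy classes. In `V_{8n}` take `A = ⟨a, b²⟩`, the elements with an even exponent of
`b`, and `g = b`. The relations let every element be written `a^i b^j`, and the images of
`V_{8n}` in two dihedral groups show that this form is unique, so `|A| = 4n`. Since
`b a^i b⁻¹ = a^{-i} b^{-2i}`, the element `a^i` commutes with `b` only if `a^{2i} = b^{2i} = 1`;
for odd `n` this forces `a^i = 1`, whence `C_A(b) = ⟨b²⟩` has order two.
-/

section IndexTwo

variable {G : Type*} [Group G]

theorem commute_mul_right_iff {x y z : G} (hxy : Commute x y) :
    Commute x (y * z) ↔ Commute x z :=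
  ⟨fun h ↦ by simpa using hxy.inv_right.mul_right h, hxy.mul_right⟩

variable {A : Subgroup G} {g : G}

theorem bijective_sumElim_coe_mul_right_of_index_eq_two (hA : A.index = 2) (hg : g ∉ A) :
    Function.Bijective (Sum.elim (fun x : A ↦ (x : G)) fun x : A ↦ (x : G) * g) := by
  refine ⟨Subtype.val_injective.sumElim
    ((mul_left_injective g).comp Subtype.val_injective) fun x y hxy ↦ ?_, fun x ↦ ?_⟩
  · exact hg ((A.mul_mem_cancel_left y.2).mp (hxy ▸ x.2))
  · by_cases hx : x ∈ A
    · exact ⟨.inl ⟨x, hx⟩, rfl⟩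
    · have hxg : x * g⁻¹ ∈ A := by
        simp [Subgroup.mul_mem_iff_of_index_two hA, hx, hg]
      exact ⟨.inr ⟨x * g⁻¹, hxg⟩, inv_mul_cancel_right x g⟩

theorem sum_eq_sum_add_sum_mul_right_of_index_eq_two [Fintype G] [Fintype A] {M : Type*}
    [AddCommMonoid M] (hA : A.index = 2) (hg : g ∉ A) (f : G → M) :
    ∑ x, f x = ∑ x : A, f x + ∑ x : A, f (x * g) :=
  ((bijective_sumElim_coe_mul_right_of_index_eq_two hA hg).sum_comp f).symm.trans
    (Fintype.sum_sum_type _)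

theorem card_subtype_commute_eq_card_inf_centralizer (A : Subgroup G) (g : G) :
    Nat.card {x : A // Commute (x : G) g} =
      Nat.card (A ⊓ Subgroup.centralizer {g} : Subgroup G) :=
  Nat.card_congr <| (Equiv.subtypeSubtypeEquivSubtypeInter (· ∈ A) (Commute · g)).trans <|
    Equiv.subtypeEquivRight fun _ ↦
      and_congr_right' Subgroup.mem_centralizer_singleton_iff.symm

variable [IsMulCommutative A]

theorem commute_coe_mul_iff (x y : A) : Commute (x : G) (y * g) ↔ Commute (x : G) g :=
  commute_mul_right_iff (setLike_mul_comm x.2 y.2)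

theorem commute_mul_coe_iff (x y : A) : Commute ((x : G) * g) y ↔ Commute (y : G) g :=
  Commute.symm_iff.trans (commute_coe_mul_iff y x)

theorem commute_mul_mul_iff (x y : A) :
    Commute ((x : G) * g) (y * g) ↔ Commute ((x / y : A) : G) g := by
  have hx : (x : G) * g = (x / y : A) * (y * g) := by simp [div_eq_mul_inv, mul_assoc]
  rw [hx, Commute.symm_iff, ← commute_coe_mul_iff (x / y) y]
  exact ⟨fun h ↦ mul_right_cancel (h.eq.symm.trans (mul_assoc _ _ _).symm),
    fun h ↦ h.symm.mul_right (.refl _)⟩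

theorem card_commute_of_index_eq_two [Finite G] (hA : A.index = 2) (hg : g ∉ A) :
    Nat.card {p : G × G // Commute p.1 p.2} =
      Nat.card A * (Nat.card A + 3 * Nat.card (A ⊓ Subgroup.centralizer {g} : Subgroup G)) := by
  classical
  have := Fintype.ofFinite G
  set c := Nat.card (A ⊓ Subgroup.centralizer {g} : Subgroup G)
  let f (x y : G) : ℕ := if Commute x y then 1 else 0
  have hf {x y u v : G} (h : Commute x y ↔ Commute u v) : f x y = f u v := by simp only [f, h]
  have hsum_const (k : ℕ) : ∑ _x : A, k = Nat.card A * k := by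
    rw [Finset.sum_const, Finset.card_univ, Nat.card_eq_fintype_card, smul_eq_mul]
  have hc : ∑ x : A, f x g = c := by
    rw [← Finset.card_filter, ← Fintype.card_subtype, ← Nat.card_eq_fintype_card,
      card_subtype_commute_eq_card_inf_centralizer]
  have hA_A : ∑ x : A, ∑ y : A, f x y = Nat.card A * Nat.card A := by
    have hone (x y : A) : f x y = 1 := if_pos (setLike_mul_comm x.2 y.2)
    simp only [hone, hsum_const, mul_one]
  have hAg_A : ∑ x : A, ∑ y : A, f (x * g) y = Nat.card A * c := by
    simp only [hf (commute_mul_coe_iff _ _), hc, hsum_const]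
  have hA_Ag : ∑ x : A, ∑ y : A, f x (y * g) = Nat.card A * c := by
    rw [Finset.sum_comm]
    simp only [hf (commute_coe_mul_iff _ _), hc, hsum_const]
  have hAg_Ag : ∑ x : A, ∑ y : A, f (x * g) (y * g) = Nat.card A * c := by
    have hdiv (x : A) : ∑ y : A, f (x / y : A) g = c :=
      ((Equiv.divLeft x).sum_comp fun u : A ↦ f u g).trans hc
    simp only [hf (commute_mul_mul_iff _ _), hdiv, hsum_const]
  rw [Nat.card_eq_fintype_card, Fintype.card_subtype, Finset.card_filter, Fintype.sum_prod_type]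
  change ∑ x, ∑ y, f x y = _
  simp only [sum_eq_sum_add_sum_mul_right_of_index_eq_two hA hg, Finset.sum_add_distrib, hA_A,
    hA_Ag, hAg_A, hAg_Ag]
  ring

theorem two_mul_card_conjClasses_of_index_eq_two [Finite G] (hA : A.index = 2) (hg : g ∉ A) :
    2 * Nat.card (ConjClasses G) =
      Nat.card A + 3 * Nat.card (A ⊓ Subgroup.centralizer {g} : Subgroup G) := by
  have hcard : Nat.card G = Nat.card A * 2 := by rw [← hA, A.card_mul_index]
  have hpairs := card_comm_eq_card_conjClasses_mul_card G
  rw [card_commute_of_index_eq_two hA hg, hcard] at hpairs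
  refine Nat.eq_of_mul_eq_mul_left (Nat.card_pos (α := A)) ?_
  rw [hpairs]
  ring

end IndexTwo

namespace V8n

variable {n : ℕ}

section Lift

variable {G : Type*} [Group G]

/-- The universal property of the presentation: the homomorphism `a ↦ x`, `b ↦ y`. -/
def lift (x y : G) (hx : x ^ (2 * n) = 1) (hy : y ^ 4 = 1) (hyx : (y * x) ^ 2 = 1)
    (hyx' : (y⁻¹ * x) ^ 2 = 1) : V8n n →* G :=
  PresentedGroup.toGroup (f := ![x, y]) <| by
    rintro w (rfl | rfl | rfl | rfl) <;> simpa

variable {x y : G} (hx : x ^ (2 * n) = 1) (hy : y ^ 4 = 1) (hyx : (y * x) ^ 2 = 1)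
    (hyx' : (y⁻¹ * x) ^ 2 = 1)

@[simp]
theorem lift_aV : lift x y hx hy hyx hyx' (aV n) = x := by simp [lift, aV]

@[simp]
theorem lift_bV : lift x y hx hy hyx hyx' (bV n) = y := by simp [lift, bV]

end Lift

section Relations

theorem aV_pow : aV n ^ (2 * n) = 1 :=
  PresentedGroup.one_of_mem (x := FreeGroup.of 0 ^ (2 * n)) (by simp [V8nRels])

theorem bV_pow : bV n ^ 4 = 1 :=
  PresentedGroup.one_of_mem (x := FreeGroup.of 1 ^ 4) (by simp [V8nRels])

theorem bV_mul_aV : bV n * aV n = (aV n)⁻¹ * (bV n)⁻¹ := by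
  rw [← mul_inv_rev, ← mul_eq_one_iff_eq_inv, ← sq]
  exact PresentedGroup.one_of_mem (x := (FreeGroup.of 1 * FreeGroup.of 0) ^ 2) (by simp [V8nRels])

theorem bV_inv_mul_aV : (bV n)⁻¹ * aV n = (aV n)⁻¹ * bV n := by
  rw [← inv_inv (_⁻¹ * bV n), mul_inv_rev, inv_inv, ← mul_eq_one_iff_eq_inv, ← sq]
  exact PresentedGroup.one_of_mem (x := ((FreeGroup.of 1)⁻¹ * FreeGroup.of 0) ^ 2)
    (by simp [V8nRels])

theorem commute_aV_bV_sq : Commute (aV n) (bV n ^ 2) := by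
  have hab : aV n * (bV n)⁻¹ = bV n * (aV n)⁻¹ := by
    rw [mul_inv_eq_iff_eq_mul, mul_assoc, ← inv_mul_eq_iff_eq_mul, bV_inv_mul_aV]
  have hb : (bV n)⁻¹ * (bV n)⁻¹ = bV n ^ 2 := by
    rw [← mul_inv_rev, ← sq, inv_eq_iff_mul_eq_one, ← pow_add, bV_pow]
  calc
    aV n * bV n ^ 2 = aV n * (bV n)⁻¹ * (bV n)⁻¹ := by rw [mul_assoc, hb]
    _ = bV n * ((aV n)⁻¹ * (bV n)⁻¹) := by rw [hab, mul_assoc]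
    _ = bV n ^ 2 * aV n := by rw [← bV_mul_aV, ← mul_assoc, sq]

theorem bV_mul_aV_zpow (i : ℤ) : bV n * aV n ^ i = aV n ^ (-i) * bV n ^ (1 - 2 * i) := by
  have hconj : bV n * aV n * (bV n)⁻¹ = (aV n)⁻¹ * (bV n ^ 2)⁻¹ := by
    rw [bV_mul_aV]; group
  calc
    bV n * aV n ^ i = (bV n * aV n * (bV n)⁻¹) ^ i * bV n := by
      rw [conj_zpow, inv_mul_cancel_right]
    _ = (aV n)⁻¹ ^ i * (bV n ^ 2)⁻¹ ^ i * bV n := by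
      rw [hconj, commute_aV_bV_sq.inv_inv.mul_zpow]
    _ = aV n ^ (-i) * bV n ^ (1 - 2 * i) := by group

theorem bV_inv_mul_aV_zpow (i : ℤ) :
    (bV n)⁻¹ * aV n ^ i = aV n ^ (-i) * bV n ^ (-1 - 2 * i) := by
  rw [inv_mul_eq_iff_eq_mul, ← mul_assoc, bV_mul_aV_zpow]
  group

theorem closure_aV_bV : Subgroup.closure {aV n, bV n} = ⊤ := by
  rw [← PresentedGroup.closure_range_of]
  congr 1
  ext x
  simp [Fin.exists_fin_two, aV, bV, eq_comm]

theorem exists_eq_aV_zpow_mul_bV_zpow (x : V8n n) : ∃ i j : ℤ, x = aV n ^ i * bV n ^ j := by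
  have hx : x ∈ Subgroup.closure {aV n, bV n} := closure_aV_bV ▸ Subgroup.mem_top x
  induction hx using Subgroup.closure_induction_left with
  | one => exact ⟨0, 0, by simp⟩
  | mul_left s hs y _ ih =>
    obtain ⟨i, j, rfl⟩ := ih
    rcases hs with rfl | rfl
    · exact ⟨1 + i, j, by rw [zpow_one_add, mul_assoc]⟩
    · exact ⟨-i, 1 - 2 * i + j, by rw [zpow_add, ← mul_assoc, ← mul_assoc, bV_mul_aV_zpow]⟩
  | inv_mul_cancel s hs y _ ih =>
    obtain ⟨i, j, rfl⟩ := ih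
    rcases hs with rfl | rfl
    · exact ⟨-1 + i, j, by rw [zpow_add, zpow_neg_one, mul_assoc]⟩
    · exact ⟨-i, -1 - 2 * i + j, by
        rw [zpow_add, ← mul_assoc, ← mul_assoc, bV_inv_mul_aV_zpow]⟩

end Relations

section Order

open DihedralGroup

/-- The action of `V_{8n}` on the `2n`-gon in which `a` rotates and `b` reflects; it detects the
order of `a`. -/
def toDihedralTwoMul (n : ℕ) : V8n n →* DihedralGroup (2 * n) :=
  lift (r 1) (sr 0) (by simp) (by simp [pow_succ]) (by simp [sq]) (by simp [sq])

/-- The action of `V_{8n}` on the square in which `a` reflects and `b` rotates; it detects the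
order of `b` and separates `⟨b⟩` from `⟨a⟩`. -/
def toDihedralFour (n : ℕ) : V8n n →* DihedralGroup 4 :=
  lift (sr 0) (r 1) (by simp [pow_mul, sq]) (by decide) (by decide) (by decide)

theorem orderOf_aV : orderOf (aV n) = 2 * n := by
  refine Nat.dvd_antisymm (orderOf_dvd_of_pow_eq_one aV_pow) ?_
  simpa [toDihedralTwoMul] using orderOf_map_dvd (toDihedralTwoMul n) (aV n)

theorem orderOf_bV : orderOf (bV n) = 4 := by
  refine Nat.dvd_antisymm (orderOf_dvd_of_pow_eq_one bV_pow) ?_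
  simpa [toDihedralFour] using orderOf_map_dvd (toDihedralFour n) (bV n)

theorem orderOf_bV_sq : orderOf (bV n ^ 2) = 2 := by
  rw [orderOf_pow_of_dvd two_ne_zero] <;> norm_num [orderOf_bV]

theorem disjoint_zpowers_aV_zpowers_bV :
    Disjoint (Subgroup.zpowers (aV n)) (Subgroup.zpowers (bV n)) := by
  rw [Subgroup.disjoint_def]
  rintro _ ⟨i, rfl⟩ ⟨j, hij : bV n ^ j = aV n ^ i⟩
  have hdihedral : (r j : DihedralGroup 4) = sr 0 ^ i := by
    simpa [toDihedralFour] using congrArg (toDihedralFour n) hij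
  obtain ⟨k, rfl | rfl⟩ := Int.even_or_odd' i
  · have hj : (r j : DihedralGroup 4) = r 0 := by simpa [zpow_mul, sq] using hdihedral
    have hbj : bV n ^ j = 1 := by
      rw [← orderOf_dvd_iff_zpow_eq_one, orderOf_bV]
      exact (ZMod.intCast_zmod_eq_zero_iff_dvd j 4).mp (r.inj hj)
    exact hij.symm.trans hbj
  · simp [zpow_add, zpow_mul, sq] at hdihedral

theorem isComplement'_zpowers_aV_zpowers_bV :
    (Subgroup.zpowers (aV n)).IsComplement' (Subgroup.zpowers (bV n)) := by
  refine Subgroup.isComplement'_of_disjoint_and_mul_eq_univ disjoint_zpowers_aV_zpowers_bV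
    (Set.eq_univ_of_forall fun x ↦ ?_)
  obtain ⟨i, j, rfl⟩ := exists_eq_aV_zpow_mul_bV_zpow x
  exact Set.mul_mem_mul ⟨i, rfl⟩ ⟨j, rfl⟩

theorem natCard : Nat.card (V8n n) = 8 * n := by
  rw [← isComplement'_zpowers_aV_zpowers_bV.card_mul_card, Nat.card_zpowers, Nat.card_zpowers,
    orderOf_aV, orderOf_bV]
  ring

end Order

section Parity

/-- The sign homomorphism `a ↦ 1`, `b ↦ -1`, recording the parity of the exponent of `b`; its
kernel is the abelian subgroup `⟨a, b²⟩` of index two. -/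
def parity (n : ℕ) : V8n n →* ℤˣ :=
  lift 1 (-1) (by simp) (by decide) (by decide) (by decide)

@[simp]
theorem parity_aV : parity n (aV n) = 1 := lift_aV ..

@[simp]
theorem parity_bV : parity n (bV n) = -1 := lift_bV ..

theorem bV_notMem_ker_parity (n : ℕ) : bV n ∉ (parity n).ker := by
  simp [MonoidHom.mem_ker]

theorem exists_eq_of_mem_ker_parity {x : V8n n} (hx : x ∈ (parity n).ker) :
    ∃ i k : ℤ, x = aV n ^ i * (bV n ^ 2) ^ k := by
  obtain ⟨i, j, rfl⟩ := exists_eq_aV_zpow_mul_bV_zpow x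
  obtain ⟨k, rfl | rfl⟩ := Int.even_or_odd' j
  · exact ⟨i, k, by rw [zpow_mul, zpow_ofNat]⟩
  · simp [MonoidHom.mem_ker, zpow_add, zpow_mul] at hx

theorem index_ker_parity (n : ℕ) : (parity n).ker.index = 2 := by
  have hsurj : Function.Surjective (parity n) := fun u ↦ by
    rcases Int.units_eq_one_or u with rfl | rfl
    exacts [⟨1, map_one _⟩, ⟨bV n, parity_bV⟩]
  rw [Subgroup.index_ker, MonoidHom.range_eq_top.mpr hsurj, Subgroup.card_top]
  simp

instance isMulCommutative_ker_parity : IsMulCommutative (parity n).ker := by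
  refine .of_setLike_mul_comm fun x hx y hy ↦ ?_
  obtain ⟨i, k, rfl⟩ := exists_eq_of_mem_ker_parity hx
  obtain ⟨j, l, rfl⟩ := exists_eq_of_mem_ker_parity hy
  have hab (i k : ℤ) : Commute (aV n ^ i) ((bV n ^ 2) ^ k) := commute_aV_bV_sq.zpow_zpow i k
  exact (((Commute.zpow_zpow_self _ i j).mul_right (hab i l)).mul_left
    ((hab j k).symm.mul_right (.zpow_zpow_self _ k l))).eq

theorem natCard_ker_parity : Nat.card (parity n).ker = 4 * n := by
  have h := (parity n).ker.card_mul_index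
  rw [index_ker_parity, natCard] at h
  lia

theorem commute_aV_zpow_bV_iff (hodd : Odd n) {i : ℤ} :
    Commute (aV n ^ i) (bV n) ↔ aV n ^ i = 1 := by
  refine ⟨fun h ↦ ?_, fun h ↦ h ▸ .one_left _⟩
  have hpow : aV n ^ (2 * i) = bV n ^ (-2 * i) := by
    calc
      aV n ^ (2 * i) = aV n ^ i * (aV n ^ i * bV n) * (bV n)⁻¹ := by group
      _ = aV n ^ i * (aV n ^ (-i) * bV n ^ (1 - 2 * i)) * (bV n)⁻¹ := by
        rw [h.eq, bV_mul_aV_zpow]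
      _ = bV n ^ (-2 * i) := by group
  have ha : aV n ^ (2 * i) = 1 := Subgroup.disjoint_def.mp disjoint_zpowers_aV_zpowers_bV
    ⟨2 * i, rfl⟩ (hpow ▸ ⟨-2 * i, rfl⟩)
  have hni : (n : ℤ) ∣ i := by
    rw [← orderOf_dvd_iff_zpow_eq_one, orderOf_aV] at ha
    exact Int.dvd_of_mul_dvd_mul_left two_ne_zero (by exact_mod_cast ha)
  have h2i : 2 ∣ i := by
    have hb : bV n ^ (-2 * i) = 1 := hpow ▸ ha
    rw [← orderOf_dvd_iff_zpow_eq_one, orderOf_bV] at hb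
    lia
  rw [← orderOf_dvd_iff_zpow_eq_one, orderOf_aV]
  push_cast
  exact IsCoprime.mul_dvd (Nat.isCoprime_iff_coprime.mpr hodd.coprime_two_left) h2i hni

theorem ker_parity_inf_centralizer_bV (hodd : Odd n) :
    (parity n).ker ⊓ Subgroup.centralizer {bV n} = Subgroup.zpowers (bV n ^ 2) := by
  ext x
  rw [Subgroup.mem_inf, Subgroup.mem_centralizer_singleton_iff]
  constructor
  · rintro ⟨hx, hxb : Commute x (bV n)⟩
    obtain ⟨i, k, rfl⟩ := exists_eq_of_mem_ker_parity hx
    have hb : Commute ((bV n ^ 2) ^ k) (bV n) := ((Commute.refl _).pow_left 2).zpow_left k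
    have ha : Commute (aV n ^ i) (bV n) := by simpa using hxb.mul_left hb.inv_left
    exact ⟨k, by simp [(commute_aV_zpow_bV_iff hodd).mp ha]⟩
  · rintro ⟨k, rfl⟩
    exact ⟨by simp [MonoidHom.mem_ker], ((Commute.refl _).pow_left 2).zpow_left k⟩

end Parity

end V8n

/-- If `n` is an odd positive integer, then `V_{8n}` has exactly
`2n + 3` conjugacy classes. -/
theorem card_conjClasses_V8n_odd (n : ℕ) (hn : 0 < n) (hodd : Odd n) :
    Nat.card (ConjClasses (V8n n)) = 2 * n + 3 := by
  have : Finite (V8n n) := Nat.finite_of_card_ne_zero (by rw [V8n.natCard]; lia)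
  have hcount := two_mul_card_conjClasses_of_index_eq_two (V8n.index_ker_parity n)
    (V8n.bV_notMem_ker_parity n)
  rw [V8n.natCard_ker_parity, V8n.ker_parity_inf_centralizer_bV hodd, Nat.card_zpowers,
    V8n.orderOf_bV_sq] at hcount
  lia
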